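/- With notation as in the context: let I and J be ideals of L = A[1/p] such that for every finite ℚ_p-algebra B and every ring homomorphism f : L → B, one has I ⊆ ker f if and only if J ⊆ ker f. Then I = J. In other words, a quotient ring of L is characterized by the set of homomorphisms from L to finite ℚ_p-algebras that factor through it. -/

import Mathlib

/-!
The ring `L = A[1/p]` is Noetherian, so by Krull's intersection theorem every ideal `I` is the
intersection of the ideals `I + n ^ k`, with `n` maximal and `k ≥ 0` (`exists_notMem_sup_pow`).
It therefore suffices that each `L / (I + n ^ k)` is a finite `ℚ_p`-algebra, for then the quotient
map to it is one of the maps in the hypothesis. Filtering by powers of `n`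
(`finite_of_pow_smul_top_eq_bot`) reduces this to the residue fields `K = L / n`.

Such a `K` is a field of finite type over `R` in which `p` is invertible. Let `D` be the image of
`R` in `K`, a Noetherian local domain. By Chevalley's theorem the generic point of `Spec D`, being
the image of `Spec K`, is open; together with Krull's principal ideal theorem and prime avoidance
this forces every nonzero prime of `D` to be maximal (`eq_maximalIdeal_of_finiteType_field`). Hence
`D / p` has finite length, so it is finite over `ℤ_p` because the residue field is finite, and `D`
itself is finite over `ℤ_p` by the complete version of Nakayama's lemma
(`finite_of_finiteType_field_of_injective`). Thus `K` is of finite type over `ℤ_p`, and Zariski's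
lemma over `ℚ_p` concludes (`finite_padic_of_finiteType_field`).
-/

open IsLocalRing

theorem finite_of_smul_top_eq_bot {S L M : Type*} [CommRing S] [CommRing L] [Algebra S L]
    [AddCommGroup M] [Module S M] [Module L M] [IsScalarTower S L M] [Module.Finite L M]
    (n : Ideal L) [Module.Finite S (L ⧸ n)] (h : n • (⊤ : Submodule L M) = ⊥) :
    Module.Finite S M := by
  have ht : Module.IsTorsionBySet L M (n : Set L) := by
    intro x a
    have : (a : L) • x ∈ n • (⊤ : Submodule L M) :=
      Submodule.smul_mem_smul a.2 Submodule.mem_top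
    simpa [h] using this
  let := ht.module
  have : IsScalarTower S (L ⧸ n) M := ht.isScalarTower
  have : IsScalarTower L (L ⧸ n) M := ht.isScalarTower
  have : Module.Finite (L ⧸ n) M := Module.Finite.of_restrictScalars_finite L _ _
  exact Module.Finite.trans (L ⧸ n) M

/-- If `L / n` is finite over `S`, so is every finite `L`-module killed by a power of `n`: such a
module is an iterated extension of finite `L / n`-modules. -/
theorem finite_of_pow_smul_top_eq_bot {S L : Type*} [CommRing S] [CommRing L] [Algebra S L]
    [IsNoetherianRing L] (n : Ideal L) [Module.Finite S (L ⧸ n)] (k : ℕ) :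
    ∀ (M : Type*) [AddCommGroup M] [Module S M] [Module L M] [IsScalarTower S L M]
      [Module.Finite L M], n ^ k • (⊤ : Submodule L M) = ⊥ → Module.Finite S M := by
  induction k with
  | zero =>
    intro M _ _ _ _ _ h
    have : Subsingleton M := by
      rw [← Submodule.subsingleton_iff L, ← subsingleton_iff_bot_eq_top]
      simpa using h.symm
    infer_instance
  | succ k ih =>
    intro M _ _ _ _ _ h
    let N : Submodule L M := n • ⊤
    have : Module.Finite S N := by
      refine ih N ?_
      apply Submodule.map_injective_of_injective N.subtype_injective
      rw [Submodule.map_smul'', Submodule.map_top, Submodule.range_subtype, Submodule.map_bot,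
        ← h, pow_succ, mul_smul]
    have : Module.Finite S (M ⧸ N) := by
      refine finite_of_smul_top_eq_bot (L := L) n ?_
      rw [← Submodule.range_mkQ N, ← Submodule.map_top, ← Submodule.map_smul'']
      rw [← le_bot_iff, Submodule.map_le_iff_le_comap, Submodule.comap_bot, Submodule.ker_mkQ]
    have : Module.Finite S (N.restrictScalars S) := ‹Module.Finite S N›
    have : Module.Finite S (M ⧸ N.restrictScalars S) := ‹Module.Finite S (M ⧸ N)›
    exact Module.Finite.of_submodule_quotient (N.restrictScalars S)

/-- A Noetherian local domain contained in a field of finite type over it has dimension at most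
one. -/
theorem eq_maximalIdeal_of_finiteType_field {D K : Type*} [CommRing D] [IsNoetherianRing D]
    [IsLocalRing D] [IsDomain D] [Field K] [Algebra D K] [Algebra.FiniteType D K]
    (hinj : Function.Injective (algebraMap D K)) (Q : Ideal D) [hQ : Q.IsPrime] (hQ0 : Q ≠ ⊥) :
    Q = maximalIdeal D := by
  have hrange : Set.range (PrimeSpectrum.comap (algebraMap D K)) = {⊥} := by
    ext x
    simp only [Set.mem_range, Set.mem_singleton_iff]
    constructor
    · rintro ⟨y, rfl⟩
      obtain rfl : y = ⊥ := Subsingleton.elim _ _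
      ext1
      exact (RingHom.injective_iff_ker_eq_bot _).1 hinj
    · rintro rfl
      refine ⟨⊥, ?_⟩
      ext1
      exact (RingHom.injective_iff_ker_eq_bot _).1 hinj
  -- The generic point is constructible by Chevalley's theorem and stable under generalization.
  have hopen : IsOpen ({⊥} : Set (PrimeSpectrum D)) := by
    apply PrimeSpectrum.isOpen_of_stableUnderGeneralization_of_isConstructible
    · rintro x y hxy rfl
      have : y ≤ ⊥ := (PrimeSpectrum.le_iff_specializes y ⊥).2 hxy
      exact le_bot_iff.1 this
    · rw [← hrange]
      refine PrimeSpectrum.isConstructible_range_comap ?_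
      rw [RingHom.finitePresentation_algebraMap]
      exact Algebra.FinitePresentation.of_finiteType.1 inferInstance
  -- A basic open set reduced to the generic point: `f` lies in every nonzero prime.
  obtain ⟨_, ⟨f, rfl⟩, hf, hsub⟩ :=
    PrimeSpectrum.isTopologicalBasis_basic_opens.exists_subset_of_mem_open
      (Set.mem_singleton _) hopen
  have hf0 : f ≠ 0 := by simpa using hf
  have hmem (q : Ideal D) [hq : q.IsPrime] (hq0 : q ≠ ⊥) : f ∈ q := by
    by_contra hfq
    have := hsub (show (⟨q, hq⟩ : PrimeSpectrum D) ∈ _ from hfq)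
    exact hq0 (congrArg PrimeSpectrum.asIdeal this)
  -- A prime of height at most one contains no nonzero prime strictly smaller than itself.
  have hht (q q' : Ideal D) [q.IsPrime] [q'.IsPrime] (h0 : q ≠ ⊥) (hlt : q < q')
      (h1 : q'.height ≤ 1) : False := by
    have := (Ideal.height_le_iff (n := 1)).1 (by exact_mod_cast h1) q inferInstance hlt
    have h0' : q.height ≤ (0 : ℕ) := by
      rw [Nat.cast_one] at this
      simpa using Order.lt_one_iff_nonpos.mp this
    exact absurd ((Ideal.height_le_iff (n := 0)).1 h0' ⊥ Ideal.isPrime_bot (bot_lt_iff_ne_bot.2 h0))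
      (by simp)
  by_contra hQm
  have hQlt : Q < maximalIdeal D := lt_of_le_of_ne (le_maximalIdeal hQ.ne_top) hQm
  have hfin := (Ideal.span {f}).finite_minimalPrimes_of_isNoetherianRing D
  have hspan (q : Ideal D) [q.IsPrime] (hq0 : q ≠ ⊥) : ∃ r ∈ (Ideal.span {f}).minimalPrimes, r ≤ q :=
    Ideal.exists_minimalPrimes_le ((Ideal.span_singleton_le_iff_mem _).2 (hmem q hq0))
  have hne (r : Ideal D) (hr : r ∈ (Ideal.span {f}).minimalPrimes) : r ≠ ⊥ := by
    rintro rfl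
    exact hf0 ((Ideal.span_singleton_le_iff_mem _).1 hr.1.2)
  -- If the maximal ideal were covered by the finitely many minimal primes over `f`, it would be
  -- one of them, hence of height at most one, contradicting `0 < Q < maximalIdeal D`.
  have havoid : ¬ ((maximalIdeal D : Set D) ⊆ ⋃ r ∈ hfin.toFinset, (r : Set D)) := by
    refine (Ideal.subset_union_prime ⊥ ⊥ fun r hr _ _ ↦ (hfin.mem_toFinset.1 hr).1.1).not.2 ?_
    rintro ⟨r, hr, hle⟩
    have hr := hfin.mem_toFinset.1 hr
    have : r.IsPrime := hr.1.1
    exact hht Q r hQ0 (hQlt.trans_le hle)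
      (Ideal.height_le_one_of_isPrincipal_of_mem_minimalPrimes _ _ hr)
  obtain ⟨x, hxm, hx⟩ := Set.not_subset.1 havoid
  simp only [Set.mem_iUnion, not_exists, Set.Finite.mem_toFinset, SetLike.mem_coe] at hx
  -- A minimal prime over `x` is not minimal over `f`, but contains such a prime, so it has height
  -- at least two, against the principal ideal theorem.
  obtain ⟨q, hq⟩ := (Ideal.span {x}).nonempty_minimalPrimes
    (ne_top_of_le_ne_top (maximalIdeal.isMaximal D).ne_top
      ((Ideal.span_singleton_le_iff_mem _).2 hxm))
  have : q.IsPrime := hq.1.1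
  have hxq : x ∈ q := (Ideal.span_singleton_le_iff_mem _).1 hq.1.2
  have hq0 : q ≠ ⊥ := by
    rintro rfl
    obtain ⟨r, hr, -⟩ := hspan Q hQ0
    exact hx r hr (by rw [(Submodule.mem_bot D).1 hxq]; exact r.zero_mem)
  obtain ⟨r, hr, hrq⟩ := hspan q hq0
  have : r.IsPrime := hr.1.1
  exact hht r q (hne r hr) (lt_of_le_of_ne hrq fun h ↦ hx r hr (h ▸ hxq))
    (Ideal.height_le_one_of_isPrincipal_of_mem_minimalPrimes _ _ hq)

theorem isPrecomplete_fin {S : Type*} [CommRing S] (I : Ideal S) [IsPrecomplete I S] (m : ℕ) :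
    IsPrecomplete I (Fin m → S) := by
  rw [← AdicCompletion.of_surjective_iff]
  intro x
  choose a ha using fun i ↦ AdicCompletion.of_surjective I S (AdicCompletion.piEquivFin I m x i)
  refine ⟨a, (AdicCompletion.piEquivFin I m).injective ?_⟩
  ext1 i
  rw [← ha i, AdicCompletion.piEquivFin_apply]
  rfl

/-- Nakayama's lemma over an `I`-adically precomplete ring: for an `I`-adically separated module,
finiteness modulo `I` implies finiteness, with no finiteness assumed beforehand. -/
theorem finite_of_finite_quotient {S M : Type*} [CommRing S] (I : Ideal S) [IsPrecomplete I S]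
    [AddCommGroup M] [Module S M] [IsHausdorff I M]
    [Module.Finite S (M ⧸ (I • ⊤ : Submodule S M))] : Module.Finite S M := by
  obtain ⟨m, g, hg⟩ := Module.Finite.exists_fin' S (M ⧸ (I • ⊤ : Submodule S M))
  obtain ⟨f, hf⟩ := Module.projective_lifting_property (Submodule.mkQ (I • ⊤ : Submodule S M)) g
    (Submodule.mkQ_surjective _)
  have := isPrecomplete_fin I m
  exact Module.Finite.of_surjective f (surjective_of_mkQ_comp_surjective (I := I) (hf ▸ hg))

/-- The residue field, being finite, cannot contain `ℤ_p`; so some `u * p ^ k` with `u` a unit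
vanishes in it, and hence so does `p`. -/
theorem natCast_mem_maximalIdeal (p : ℕ) [Fact p.Prime] (R : Type*) [CommRing R] [IsLocalRing R]
    [Finite (ResidueField R)] [Algebra ℤ_[p] R] : (p : R) ∈ maximalIdeal R := by
  have hker : RingHom.ker (algebraMap ℤ_[p] (ResidueField R)) ≠ ⊥ := by
    intro h
    have : Infinite ℤ_[p] := Infinite.of_injective _ (Nat.cast_injective (R := ℤ_[p]))
    have := Finite.of_injective _ ((RingHom.injective_iff_ker_eq_bot _).2 h)
    exact not_finite ℤ_[p]
  obtain ⟨a, ha, ha0⟩ := Submodule.exists_mem_ne_zero_of_ne_bot hker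
  by_contra hp
  have hpu : IsUnit (algebraMap ℤ_[p] (ResidueField R) p) := by
    rw [map_natCast, ← map_natCast (residue R)]
    exact (of_not_not hp : IsUnit (p : R)).map _
  rw [RingHom.mem_ker, PadicInt.unitCoeff_spec ha0, map_mul, map_pow] at ha
  exact ((((Units.isUnit _).map _).mul (hpu.pow _)).ne_zero) ha

/-- A Noetherian local domain over `ℤ_p` with finite residue field is finite over `ℤ_p` as soon as it
embeds in a field of characteristic zero of finite type over it. -/
theorem finite_of_finiteType_field_of_injective (p : ℕ) [Fact p.Prime] {D K : Type*} [CommRing D]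
    [IsNoetherianRing D] [IsLocalRing D] [IsDomain D] [Finite (ResidueField D)] [Algebra ℤ_[p] D]
    [Field K] [CharZero K] [Algebra D K] [Algebra.FiniteType D K]
    (hinj : Function.Injective (algebraMap D K)) : Module.Finite ℤ_[p] D := by
  have hp := natCast_mem_maximalIdeal p D
  have hp0 : (p : D) ≠ 0 := by
    intro h
    have := congrArg (algebraMap D K) h
    simp [(Fact.out : p.Prime).ne_zero] at this
  let I : Ideal ℤ_[p] := maximalIdeal ℤ_[p]
  have hmap : I.map (algebraMap ℤ_[p] D) = Ideal.span {(p : D)} := by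
    simp only [I, PadicInt.maximalIdeal_eq_span_p, Ideal.map_span, Set.image_singleton, map_natCast]
  have hle : Ideal.span {(p : D)} ≤ maximalIdeal D := (Ideal.span_singleton_le_iff_mem _).2 hp
  have : IsHausdorff I D := by
    rw [← IsHausdorff.map_algebraMap_iff (S := D), hmap]
    exact IsHausdorff.of_isLocalRing _ _ (ne_top_of_le_ne_top (maximalIdeal.isMaximal D).ne_top hle)
  obtain ⟨k, hk⟩ : ∃ k, maximalIdeal D ^ k ≤ Ideal.span {(p : D)} := by
    refine Ideal.exists_pow_le_of_le_radical_of_fg ?_ (IsNoetherian.noetherian _)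
    rw [Ideal.radical_eq_sInf]
    refine le_sInf fun Q ⟨hQ, hQp⟩ ↦ ?_
    rw [eq_maximalIdeal_of_finiteType_field hinj Q]
    rintro rfl
    exact hp0 ((Ideal.span_singleton_le_iff_mem _).1 hQ)
  have : Finite (D ⧸ maximalIdeal D) := ‹Finite (ResidueField D)›
  have : Module.Finite ℤ_[p] (D ⧸ Ideal.span {(p : D)}) := by
    refine finite_of_pow_smul_top_eq_bot (maximalIdeal D) k _ ?_
    rw [eq_bot_iff, Submodule.smul_le]
    rintro r hr x -
    obtain ⟨x, rfl⟩ := Ideal.Quotient.mk_surjective x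
    rw [Submodule.mem_bot, Algebra.smul_def, Ideal.Quotient.algebraMap_eq, ← map_mul,
      Ideal.Quotient.eq_zero_iff_mem]
    exact Ideal.mul_mem_right _ _ (hk hr)
  have : Module.Finite ℤ_[p] (D ⧸ (I • ⊤ : Submodule ℤ_[p] D)) := by
    rw [Ideal.smul_top_eq_map, hmap]
    exact this
  exact finite_of_finite_quotient I

/-- The Nullstellensatz over `R[1/p]`: residue fields of finitely generated algebras are finite over
`ℚ_p`. -/
theorem finite_padic_of_finiteType_field (p : ℕ) [Fact p.Prime] (R : Type*) {K : Type*}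
    [CommRing R] [IsNoetherianRing R] [IsLocalRing R] [Finite (ResidueField R)] [Algebra ℤ_[p] R]
    [Field K] [Algebra ℚ_[p] K] [Algebra R K] [Algebra ℤ_[p] K] [IsScalarTower ℤ_[p] R K]
    [IsScalarTower ℤ_[p] ℚ_[p] K] [Algebra.FiniteType R K] : Module.Finite ℚ_[p] K := by
  let D := R ⧸ RingHom.ker (algebraMap R K)
  let : Algebra D K := (RingHom.kerLift (algebraMap R K)).toAlgebra
  have : CharZero K := charZero_of_injective_algebraMap (algebraMap ℚ_[p] K).injective
  have : IsScalarTower R D K := .of_algebraMap_eq fun _ ↦ rfl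
  have : IsScalarTower ℤ_[p] D K := .of_algebraMap_eq fun x ↦ by
    rw [IsScalarTower.algebraMap_apply ℤ_[p] R K, IsScalarTower.algebraMap_apply R D K,
      IsScalarTower.algebraMap_apply ℤ_[p] R D]
  have : Algebra.FiniteType D K := .of_restrictScalars_finiteType R D K
  have : (RingHom.ker (algebraMap R K)).IsPrime := RingHom.ker_isPrime _
  have : IsLocalRing D := .of_surjective' (Ideal.Quotient.mk _) Ideal.Quotient.mk_surjective
  have : IsLocalHom (Ideal.Quotient.mk (RingHom.ker (algebraMap R K)) : R →+* D) :=
    .of_surjective _ Ideal.Quotient.mk_surjective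
  have : Finite (ResidueField D) :=
    Finite.of_surjective (ResidueField.map (Ideal.Quotient.mk _ : R →+* D)) <| by
      refine Function.Surjective.of_comp (g := residue R) ?_
      exact (residue_surjective (R := D)).comp Ideal.Quotient.mk_surjective
  have : Module.Finite ℤ_[p] D :=
    finite_of_finiteType_field_of_injective p (RingHom.kerLift_injective (algebraMap R K))
  have : Algebra.FiniteType ℤ_[p] K := .trans (S := D) inferInstance inferInstance
  have : Algebra.FiniteType ℚ_[p] K := .of_restrictScalars_finiteType ℤ_[p] ℚ_[p] K
  exact finite_of_finite_type_of_isJacobsonRing ℚ_[p] K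

/-- In a Noetherian ring, an ideal `I` is the intersection of the ideals `I + n ^ k` with `n`
maximal. -/
theorem exists_notMem_sup_pow {L : Type*} [CommRing L] [IsNoetherianRing L] (I : Ideal L) {x : L}
    (hx : x ∉ I) : ∃ n : Ideal L, n.IsMaximal ∧ ∃ k : ℕ, x ∉ I ⊔ n ^ k := by
  -- The annihilator of the class of `x` in `L / I` is proper. For a maximal ideal `n` containing it,
  -- Krull's theorem would give `r ∈ n` with `1 - r` in this annihilator.
  have hcol : I.colon {x} ≠ ⊤ := by
    intro h
    have : (1 : L) ∈ I.colon {x} := h ▸ Submodule.mem_top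
    rw [Submodule.mem_colon_singleton] at this
    exact hx (by simpa using this)
  obtain ⟨n, hn, hle⟩ := Ideal.exists_le_maximal _ hcol
  refine ⟨n, hn, ?_⟩
  by_contra! h
  have hmem : (Ideal.Quotient.mk I x) ∈ (⨅ i : ℕ, n ^ i • ⊤ : Submodule L (L ⧸ I)) := by
    refine (Submodule.mem_iInf _).2 fun i ↦ ?_
    obtain ⟨a, ha, b, hb, hab⟩ := Submodule.mem_sup.1 (h i)
    have : Ideal.Quotient.mk I x = b • (1 : L ⧸ I) := by
      rw [Algebra.smul_def, mul_one, Ideal.Quotient.algebraMap_eq, ← hab, map_add,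
        Ideal.Quotient.eq_zero_iff_mem.2 ha, zero_add]
    rw [this]
    exact Submodule.smul_mem_smul hb Submodule.mem_top
  obtain ⟨r, hr⟩ := (n.mem_iInf_smul_pow_eq_bot_iff _).1 hmem
  have h1 : 1 - (r : L) ∈ n := hle <| by
    rw [Submodule.mem_colon_singleton, smul_eq_mul, sub_mul, one_mul, ← Ideal.Quotient.eq, ← hr,
      Algebra.smul_def, Ideal.Quotient.algebraMap_eq, ← map_mul]
  exact hn.ne_top ((Ideal.eq_top_iff_one _).2 (by simpa using n.add_mem h1 r.2))

/-- For a Noetherian `ℚ_p`-algebra all of whose residue fields are finite over `ℚ_p`, ideals are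
detected by maps to finite `ℚ_p`-algebras. The maps `f` are only required to be ring homomorphisms,
and the algebras `B` live in `Type` whatever the universe of `L`. -/
theorem le_of_finite_points (p : ℕ) [Fact p.Prime] {L : Type*} [CommRing L] [IsNoetherianRing L]
    [Algebra ℚ_[p] L] (hL : ∀ n : Ideal L, n.IsMaximal → Module.Finite ℚ_[p] (L ⧸ n))
    (I J : Ideal L)
    (h : ∀ (B : Type) [CommRing B] [Algebra ℚ_[p] B] [FiniteDimensional ℚ_[p] B]
      (f : L →+* B), I ≤ RingHom.ker f → J ≤ RingHom.ker f) : J ≤ I := by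
  intro x hxJ
  by_contra hxI
  obtain ⟨n, hn, k, hxk⟩ := exists_notMem_sup_pow I hxI
  have := hL n hn
  have : Module.Finite ℚ_[p] (L ⧸ (I ⊔ n ^ k)) := by
    refine finite_of_pow_smul_top_eq_bot n k _ ?_
    rw [eq_bot_iff, Submodule.smul_le]
    rintro r hr x -
    obtain ⟨x, rfl⟩ := Ideal.Quotient.mk_surjective x
    rw [Submodule.mem_bot, Algebra.smul_def, Ideal.Quotient.algebraMap_eq, ← map_mul,
      Ideal.Quotient.eq_zero_iff_mem]
    exact Ideal.mul_mem_right _ _ (Ideal.mem_sup_right hr)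
  -- A finite-dimensional `ℚ_p`-space is in bijection with some `Fin m → ℚ_p`, so the quotient has a
  -- model in `Type`.
  have : Small.{0} (L ⧸ (I ⊔ n ^ k)) :=
    small_map (Module.finBasis ℚ_[p] (L ⧸ (I ⊔ n ^ k))).equivFun.toEquiv
  let e := Shrink.algEquiv ℚ_[p] (L ⧸ (I ⊔ n ^ k))
  have : FiniteDimensional ℚ_[p] (Shrink.{0} (L ⧸ (I ⊔ n ^ k))) :=
    Module.Finite.equiv e.symm.toLinearEquiv
  let f : L →+* Shrink.{0} (L ⧸ (I ⊔ n ^ k)) :=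
    (e.symm : _ →+* _).comp (Ideal.Quotient.mk (I ⊔ n ^ k))
  have hker : RingHom.ker f = I ⊔ n ^ k := by
    ext y
    simp [f, RingHom.mem_ker, Ideal.Quotient.eq_zero_iff_mem]
  have hJ := h _ f (hker.symm ▸ le_sup_left)
  rw [hker] at hJ
  exact hxk (hJ hxJ)


/-- Let `R` be a commutative Noetherian local `ℤ_p`-algebra with finite residue field,
complete and separated with respect to its maximal-ideal-adic topology, let `A` be a
finitely generated `R`-algebra, and let `L = A[1/p]`.  If two ideals `I, J` of `L` are
contained in the same kernels of homomorphisms from `L` to finite `ℚ_p`-algebras, then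
`I = J`: a quotient of `L` is characterized by the maps to finite `ℚ_p`-algebras factoring
through it. -/
theorem quotient_determined_by_finite_Qp_points
    (p : ℕ) [Fact p.Prime]
    (R : Type*) [CommRing R] [IsNoetherianRing R] [IsLocalRing R]
    [Finite (IsLocalRing.ResidueField R)] [Algebra ℤ_[p] R]
    [IsAdicComplete (IsLocalRing.maximalIdeal R) R]
    (A : Type*) [CommRing A] [Algebra R A] [Algebra.FiniteType R A]
    [Algebra ℤ_[p] A] [IsScalarTower ℤ_[p] R A]
    (I J : Ideal (Localization.Away (p : A)))
    (h : ∀ (B : Type) [CommRing B] [Algebra ℚ_[p] B] [FiniteDimensional ℚ_[p] B]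
      (f : Localization.Away (p : A) →+* B),
      I ≤ RingHom.ker f ↔ J ≤ RingHom.ker f) :
    I = J := by
  let L := Localization.Away (p : A)
  have hpL : IsUnit (p : L) := by
    simpa using IsLocalization.Away.algebraMap_isUnit (S := L) (p : A)
  -- As `p` is invertible in `L`, so is every nonzero `p`-adic integer, and `ℤ_p → L` extends to
  -- `ℚ_p`.
  have hunit (y : nonZeroDivisors ℤ_[p]) : IsUnit (algebraMap ℤ_[p] L y) := by
    have hy := PadicInt.unitCoeff_spec (nonZeroDivisors.coe_ne_zero y)
    rw [hy, map_mul, map_pow, map_natCast]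
    exact ((Units.isUnit _).map _).mul (hpL.pow _)
  let : Algebra ℚ_[p] L := (IsLocalization.lift hunit).toAlgebra
  have : IsScalarTower ℤ_[p] ℚ_[p] L := .of_algebraMap_eq fun x ↦
    (IsLocalization.lift_eq hunit x).symm
  have : Algebra.FiniteType A L :=
    have := IsLocalization.Away.finitePresentation (S := L) (p : A)
    inferInstance
  have : Algebra.FiniteType R L := .trans (S := A) inferInstance inferInstance
  have : IsNoetherianRing L := Algebra.FiniteType.isNoetherianRing R L
  have hL (n : Ideal L) (hn : n.IsMaximal) : Module.Finite ℚ_[p] (L ⧸ n) := by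
    let := Ideal.Quotient.field n
    have : Algebra.FiniteType L (L ⧸ n) := inferInstance
    have : Algebra.FiniteType R (L ⧸ n) := .trans (S := L) inferInstance inferInstance
    exact finite_padic_of_finiteType_field p R
  exact le_antisymm (le_of_finite_points p hL J I fun B _ _ _ f ↦ (h B f).2)
    (le_of_finite_points p hL I J fun B _ _ _ f ↦ (h B f).1)
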